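/- Let a ∈ ℝ with a² > 2, ξ = 1 − a², Pₙ(t) = Hₙ(t)·diag(1,ξ) + n·H_{n−1}(t)·[[0,−a],[−a,a²t]] (physicists' Hermite Hₙ), P₁(t) = [[2t,−a],[−a,(2−a²)t]], 𝒜(y) = −y + y'·(P₁')⁻¹·P₁, 𝒫ₙ = 𝒜(Pₙ). Let 𝔭(t) = (4 − 2a²)t² − a² (so 𝔭(t) ≠ 0 for all t ∈ ℝ) and define 𝒲_a(t) = (e^{−t²}/𝔭(t)²)·[[ (a²/(4(a²−2)))𝔭(t)² + 𝔭(t)/(a²−2) − a², a(𝔭(t)/(a²−2) − 2)t ],[ a(𝔭(t)/(a²−2) − 2)t, 2(a²(a²−2) − 𝔭(t))/(a²−2)² ]]. Then: (i) 𝒲_a(t) is a (symmetric) positive definite matrix for every t ∈ ℝ; and (ii) for all n, m ∈ ℕ∖{1}: ∫_ℝ 𝒫ₙ(t)·𝒲_a(t)·𝒫ₘ(t)ᵀ dt = δ_{n,m}·((n−1)/(2(a²−2)))·diag(1, −2/(a²−2))·√π·2ⁿ·n!·diag(1−a² + a²(n+1)/2, (1−a²)(1−a² + a²n/2)). -/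

import Mathlib

/-!
Write `u n = Hₙ`, `v n = n Hₙ₋₁`, so that `u' = 2v` and `v' = 2tv - n u` for every `n`
(including `n = 0`), and let `M = (P₁')⁻¹ P₁ = [[t, -a/2], [a/(a²-2), t]]`,
so that `𝒫ₙ = -Pₙ + Pₙ' M`. Integration by parts transfers the first-order operator from one
factor to the other:
`𝒫ₙ 𝒲 𝒫ₘᵀ = (𝒫ₙ 𝒲 Mᵀ Pₘᵀ)' - (𝒫ₙ 𝒲 + (𝒫ₙ 𝒲 Mᵀ)') Pₘᵀ`.
The last bracket is `n - 1` times a row-wise combination of `u n e^{-t²}` and `v n e^{-t²}` with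
coefficients polynomial in `t`, all poles at the zeros of `𝔭` having cancelled. Multiplied by
`Pₘᵀ`, it is again a total derivative up to a multiple of `Hₙ Hₘ e^{-t²}`. Collecting the total
derivatives, each entry of `𝒫ₙ 𝒲 𝒫ₘᵀ` is
`(wₙ L e^{-t²} / 𝔭)' + c Hₙ Hₘ e^{-t²}` with `wₙ = 2 t v n - u n`, a constant `c`, and `L` a
function of polynomial growth that depends on the entry; this is verified by direct computation in
`entry_zero_zero`, `entry_zero_one`, `entry_one_one`. The constant `c` is zero off the diagonal.
Since `𝔭` is bounded away from zero, the derivative integrates to zero (`integral_entry`), and the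
theorem follows from the classical orthogonality of the `Hₙ` (`integral_u_mul_u`).

Positive definiteness of `𝒲` is the two-by-two criterion (`Wexc_posDef`).
-/

open MeasureTheory Matrix

noncomputable section

abbrev M2 := Matrix (Fin 2) (Fin 2) ℝ

/-- the `n`-th physicists' Hermite polynomial `Hₙ(t) = (−1)ⁿ e^{t²} (d/dt)ⁿ e^{−t²}`. -/
def H (n : ℕ) (t : ℝ) : ℝ :=
  (-1 : ℝ) ^ n * Real.exp (t ^ 2) * iteratedDeriv n (fun s => Real.exp (-(s ^ 2))) t

/-- the matrix polynomials `P_{n,a,ξ}`. -/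
def Pher (a ξ : ℝ) (n : ℕ) (t : ℝ) : M2 :=
  H n t • Matrix.diagonal ![1, ξ] + ((n : ℝ) * H (n - 1) t) • !![0, -a; -a, a ^ 2 * t]

def matDeriv (f : ℝ → M2) : ℝ → M2 :=
  fun t => Matrix.of fun i j => deriv (fun s => f s i j) t

/-- `𝒜(y) = −y + y'·(P₁')⁻¹·P₁`, with `ξ = 1 − a²`. -/
def Acal (a : ℝ) (y : ℝ → M2) : ℝ → M2 :=
  fun t => -(y t)
    + matDeriv y t * ((matDeriv (Pher a (1 - a ^ 2) 1) t)⁻¹ * Pher a (1 - a ^ 2) 1 t)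

/-- the exceptional polynomials `𝒫ₙ = 𝒜(P_{n,a,1−a²})`. -/
def Pexc (a : ℝ) (n : ℕ) : ℝ → M2 := Acal a (Pher a (1 - a ^ 2) n)

/-- `𝔭(t) = (4 − 2a²)t² − a²`. -/
def pfrak (a t : ℝ) : ℝ := (4 - 2 * a ^ 2) * t ^ 2 - a ^ 2

/-- the exceptional weight `𝒲_a`. -/
def Wexc (a : ℝ) (t : ℝ) : M2 :=
  (Real.exp (-t ^ 2) / (pfrak a t) ^ 2) •
    !![a ^ 2 / (4 * (a ^ 2 - 2)) * (pfrak a t) ^ 2 + pfrak a t / (a ^ 2 - 2) - a ^ 2,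
        a * (pfrak a t / (a ^ 2 - 2) - 2) * t;
      a * (pfrak a t / (a ^ 2 - 2) - 2) * t,
        2 * (a ^ 2 * (a ^ 2 - 2) - pfrak a t) / (a ^ 2 - 2) ^ 2]

/-! ### Hermite polynomials and their differential relations -/

open Polynomial in
/-- The physicists' Hermite polynomials as elements of `ℝ[X]`, defined by
`q₀ = 1`, `qₙ₊₁ = 2X qₙ - qₙ'`. -/
def hermPoly : ℕ → ℝ[X]
  | 0 => 1
  | n + 1 => 2 * X * hermPoly n - derivative (hermPoly n)

/-- `u n = Hₙ`, as a polynomial function. -/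
def u (n : ℕ) (t : ℝ) : ℝ := (hermPoly n).eval t

/-- `v n = n Hₙ₋₁`, equal to `0` for `n = 0`. -/
def v (n : ℕ) (t : ℝ) : ℝ := n * u (n - 1) t

lemma hasDerivAt_gauss (t : ℝ) :
    HasDerivAt (fun s : ℝ => Real.exp (-s ^ 2)) (-(2 * t) * Real.exp (-t ^ 2)) t := by
  have h : HasDerivAt (fun s : ℝ => -s ^ 2) (-(2 * t)) t :=
    (hasDerivAt_pow 2 t).neg.congr_deriv (by simp)
  simpa [mul_comm] using h.exp

lemma iteratedDeriv_gauss (n : ℕ) (t : ℝ) :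
    iteratedDeriv n (fun s : ℝ => Real.exp (-(s ^ 2))) t
      = (-1) ^ n * u n t * Real.exp (-t ^ 2) := by
  induction n generalizing t with
  | zero => simp [u, hermPoly]
  | succ n ih =>
    rw [iteratedDeriv_succ, funext ih]
    have h := (((hermPoly n).hasDerivAt t).const_mul ((-1 : ℝ) ^ n)).mul (hasDerivAt_gauss t)
    have h2 := h.deriv
    simp only [Pi.mul_def] at h2
    simp only [u]
    rw [h2]
    simp [hermPoly, pow_succ]
    ring

lemma H_eq (n : ℕ) : H n = u n := by
  funext t
  have h1 : ((-1 : ℝ) ^ n) * (-1) ^ n = 1 := by rw [← mul_pow]; norm_num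
  have h2 : Real.exp (t ^ 2) * Real.exp (-t ^ 2) = 1 := by rw [← Real.exp_add]; simp
  rw [H, iteratedDeriv_gauss]
  linear_combination (u n t) * Real.exp (t ^ 2) * Real.exp (-t ^ 2) * h1 + u n t * h2

open Polynomial in
lemma derivative_hermPoly_succ (n : ℕ) :
    derivative (hermPoly (n + 1)) = 2 * ((n : ℝ[X]) + 1) * hermPoly n := by
  induction n with
  | zero => simp [hermPoly]
  | succ n ih =>
    have h : derivative (hermPoly (n + 1 + 1))
        = 2 * hermPoly (n + 1) + 2 * X * derivative (hermPoly (n + 1))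
          - derivative (derivative (hermPoly (n + 1))) := by
      rw [hermPoly]; simp
    have h3 : derivative (2 * ((n : ℝ[X]) + 1) * hermPoly n)
        = 2 * ((n : ℝ[X]) + 1) * derivative (hermPoly n) := by
      have : (2 * ((n : ℝ[X]) + 1)) = C (2 * ((n : ℝ) + 1)) := by simp [show (C 2 : ℝ[X]) = 2 from rfl]
      rw [this, derivative_C_mul]
    have h4 : hermPoly (n + 1) = 2 * X * hermPoly n - derivative (hermPoly n) := by rw [hermPoly]
    rw [h, ih, h3]
    push_cast
    linear_combination (2 * ((n : ℝ[X]) + 1)) * (-h4)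

lemma hasDerivAt_u (n : ℕ) (t : ℝ) : HasDerivAt (u n) (2 * v n t) t := by
  have h := (hermPoly n).hasDerivAt t
  cases n with
  | zero => exact h.congr_deriv (by simp [v, hermPoly])
  | succ n =>
    rw [derivative_hermPoly_succ] at h
    exact h.congr_deriv (by simp [u, v]; ring)

lemma hasDerivAt_v (n : ℕ) (t : ℝ) : HasDerivAt (v n) (2 * t * v n t - n * u n t) t := by
  cases n with
  | zero =>
    have : v 0 = fun _ => 0 := by funext s; simp [v]
    rw [this]; simpa using hasDerivAt_const t (0 : ℝ)
  | succ n =>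
    have h := ((hermPoly n).hasDerivAt t).const_mul (((n + 1 : ℕ)) : ℝ)
    exact h.congr_deriv (by simp [u, v, hermPoly]; ring)

/-! ### Functions of polynomial growth against the Gaussian -/

/-- Continuous functions of at most polynomial growth. -/
def PG (f : ℝ → ℝ) : Prop :=
  Continuous f ∧ ∃ (N : ℕ) (C : ℝ), ∀ t, |f t| ≤ C * (1 + t ^ 2) ^ N

lemma PG.const (c : ℝ) : PG fun _ => c :=
  ⟨continuous_const, 0, |c|, fun t => by simp⟩

lemma PG.id : PG fun t => t :=
  ⟨continuous_id, 1, 1, fun t => by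
    rw [abs_le]; constructor <;> nlinarith [sq_nonneg (t - 1), sq_nonneg (t + 1)]⟩

lemma PG.mul {f g : ℝ → ℝ} (hf : PG f) (hg : PG g) : PG fun t => f t * g t := by
  obtain ⟨cf, N, C, hC⟩ := hf
  obtain ⟨cg, M, D, hD⟩ := hg
  refine ⟨cf.mul cg, N + M, C * D, fun t => ?_⟩
  rw [abs_mul]
  calc |f t| * |g t| ≤ (C * (1 + t ^ 2) ^ N) * (D * (1 + t ^ 2) ^ M) :=
        mul_le_mul (hC t) (hD t) (abs_nonneg _) ((abs_nonneg _).trans (hC t))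
    _ = _ := by ring

lemma PG.add {f g : ℝ → ℝ} (hf : PG f) (hg : PG g) : PG fun t => f t + g t := by
  obtain ⟨cf, N, C, hC⟩ := hf
  obtain ⟨cg, M, D, hD⟩ := hg
  refine ⟨cf.add cg, N + M, |C| + |D|, fun t => ?_⟩
  have h1 : (1 : ℝ) ≤ 1 + t ^ 2 := by nlinarith [sq_nonneg t]
  have hN : (1 + t ^ 2) ^ N ≤ (1 + t ^ 2) ^ (N + M) := pow_le_pow_right₀ h1 (by omega)
  have hM : (1 + t ^ 2) ^ M ≤ (1 + t ^ 2) ^ (N + M) := pow_le_pow_right₀ h1 (by omega)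
  calc |f t + g t| ≤ |f t| + |g t| := abs_add_le _ _
    _ ≤ |C| * (1 + t ^ 2) ^ N + |D| * (1 + t ^ 2) ^ M := by
        refine add_le_add ((hC t).trans ?_) ((hD t).trans ?_) <;>
          exact mul_le_mul_of_nonneg_right (le_abs_self _) (by positivity)
    _ ≤ |C| * (1 + t ^ 2) ^ (N + M) + |D| * (1 + t ^ 2) ^ (N + M) := by gcongr
    _ = _ := by ring

lemma PG.neg {f : ℝ → ℝ} (hf : PG f) : PG fun t => -f t := by
  simpa using (PG.const (-1)).mul hf

lemma PG.sub {f g : ℝ → ℝ} (hf : PG f) (hg : PG g) : PG fun t => f t - g t := by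
  simpa [sub_eq_add_neg] using hf.add hg.neg

lemma PG.pow {f : ℝ → ℝ} (hf : PG f) (n : ℕ) : PG fun t => f t ^ n := by
  induction n with
  | zero => simpa using PG.const 1
  | succ n ih => simpa [pow_succ] using ih.mul hf

open Polynomial in
lemma PG.u (n : ℕ) : PG (u n) := by
  have h : ∀ p : ℝ[X], PG fun t => p.eval t := fun p => by
    induction p using Polynomial.induction_on' with
    | add p q hp hq => simpa using hp.add hq
    | monomial k c => simpa using (PG.const c).mul (PG.id.pow k)
  exact h _

lemma PG.v (n : ℕ) : PG (v n) := (PG.const _).mul (PG.u _)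

/-- Domination by a multiple of `e^{-t²/2}`, via `(1 + t²)ᴺ ≤ 2ᴺ N! exp((1 + t²)/2)`. -/
lemma PG.integrable {f : ℝ → ℝ} (hf : PG f) :
    Integrable fun t => f t * Real.exp (-t ^ 2) := by
  obtain ⟨cf, N, C, hC⟩ := hf
  have hi := (integrable_exp_neg_mul_sq (b := 1 / 2) (by norm_num)).const_mul
    (|C| * (2 ^ N * N.factorial * Real.exp (1 / 2)))
  refine hi.mono' (by fun_prop) (Filter.Eventually.of_forall fun t => ?_)
  have h0 := Real.pow_div_factorial_le_exp (x := (1 + t ^ 2) / 2) (by positivity) N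
  rw [div_le_iff₀ (by positivity), div_pow, div_le_iff₀ (by positivity)] at h0
  have he : Real.exp ((1 + t ^ 2) / 2) * Real.exp (-t ^ 2)
      = Real.exp (1 / 2) * Real.exp (-(1 / 2) * t ^ 2) := by
    rw [← Real.exp_add, ← Real.exp_add]; congr 1; ring
  rw [Real.norm_eq_abs, abs_mul, Real.abs_exp]
  calc |f t| * Real.exp (-t ^ 2)
      ≤ (|C| * (1 + t ^ 2) ^ N) * Real.exp (-t ^ 2) := by
        gcongr
        exact (hC t).trans (mul_le_mul_of_nonneg_right (le_abs_self _) (by positivity))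
    _ ≤ (|C| * (Real.exp ((1 + t ^ 2) / 2) * N.factorial * 2 ^ N)) * Real.exp (-t ^ 2) := by
        gcongr
    _ = |C| * (2 ^ N * N.factorial) * (Real.exp ((1 + t ^ 2) / 2) * Real.exp (-t ^ 2)) := by ring
    _ = _ := by rw [he]; ring

/-- The integral of `(g e^{-t²})'` over the line vanishes. -/
lemma integral_gauss_deriv {g g' : ℝ → ℝ} (hg : PG g) (hg' : PG g')
    (h : ∀ t, HasDerivAt g (g' t) t) :
    ∫ t, (g' t - 2 * t * g t) * Real.exp (-t ^ 2) = 0 := by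
  refine integral_eq_zero_of_hasDerivAt_of_integrable
    (f := fun t => g t * Real.exp (-t ^ 2)) (fun t => ?_) ?_ hg.integrable
  · exact ((h t).mul (hasDerivAt_gauss t)).congr_deriv (by ring)
  · exact (hg'.sub (((PG.const 2).mul PG.id).mul hg)).integrable

/-! ### Orthogonality of the Hermite polynomials -/

lemma u_succ (n : ℕ) (t : ℝ) : u (n + 1) t = 2 * t * u n t - 2 * v n t := by
  have h := ((hermPoly n).hasDerivAt t).unique (hasDerivAt_u n t)
  rw [← h]
  simp [u, hermPoly]

lemma v_succ (n : ℕ) (t : ℝ) : v (n + 1) t = (n + 1) * u n t := by simp [v]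

/-- Integration by parts, using `Hₙ₊₁ e^{-t²} = -(Hₙ e^{-t²})'` and `Hₘ' = 2 m Hₘ₋₁`. -/
lemma integral_u_succ_mul_u (n m : ℕ) :
    ∫ t, u (n + 1) t * u m t * Real.exp (-t ^ 2)
      = 2 * ∫ t, u n t * v m t * Real.exp (-t ^ 2) := by
  have hn := PG.u n
  have hm := PG.u m
  have hvn := PG.v n
  have hvm := PG.v m
  have h := integral_gauss_deriv (hn.mul hm)
    ((((PG.const 2).mul hvn).mul hm).add (hn.mul ((PG.const 2).mul hvm)))
    (fun t => (hasDerivAt_u n t).mul (hasDerivAt_u m t))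
  have e : ∀ t, (2 * v n t * u m t + u n t * (2 * v m t) - 2 * t * (u n t * u m t))
        * Real.exp (-t ^ 2)
      = 2 * (u n t * v m t * Real.exp (-t ^ 2)) - u (n + 1) t * u m t * Real.exp (-t ^ 2) := by
    intro t; rw [u_succ]; ring
  simp_rw [e] at h
  rw [integral_sub ((hn.mul hvm).integrable.const_mul 2) ((PG.u (n + 1)).mul hm).integrable,
    integral_const_mul] at h
  linarith

/-- The classical orthogonality of the Hermite polynomials. -/
lemma integral_u_mul_u (n m : ℕ) :
    ∫ t, u n t * u m t * Real.exp (-t ^ 2)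
      = if n = m then Real.sqrt Real.pi * 2 ^ n * (n.factorial : ℝ) else 0 := by
  induction n generalizing m with
  | zero =>
    cases m with
    | zero =>
      have := integral_gaussian 1
      simpa [u, hermPoly] using this
    | succ m =>
      have h := integral_u_succ_mul_u m 0
      have e : ∀ t, u 0 t * u (m + 1) t * Real.exp (-t ^ 2)
          = u (m + 1) t * u 0 t * Real.exp (-t ^ 2) := fun t => by ring
      simp_rw [e]
      rw [h]
      simp [v]
  | succ n ih =>
    rw [integral_u_succ_mul_u]
    cases m with
    | zero => simp [v]
    | succ m =>
      have e : ∀ t, u n t * v (m + 1) t * Real.exp (-t ^ 2)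
          = ((m : ℝ) + 1) * (u n t * u m t * Real.exp (-t ^ 2)) := fun t => by
        rw [v_succ]; ring
      simp_rw [e]
      rw [integral_const_mul, ih]
      by_cases h : n = m
      · subst h
        simp [Nat.factorial_succ, pow_succ]
        ring
      · simp [h]

/-! ### The exceptional polynomials and the exceptional weight -/

lemma pfrak_neg {a : ℝ} (ha : a ^ 2 > 2) (t : ℝ) : pfrak a t < 0 := by
  unfold pfrak
  nlinarith [mul_nonneg (sub_nonneg.2 ha.le) (sq_nonneg t)]

lemma hasDerivAt_pfrak (a t : ℝ) : HasDerivAt (pfrak a) ((4 - 2 * a ^ 2) * (2 * t)) t := by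
  exact (((hasDerivAt_pow 2 t).const_mul (4 - 2 * a ^ 2)).sub_const (a ^ 2)).congr_deriv (by simp)

/-- `1/𝔭` is bounded by `1`, since `𝔭 ≤ -a² < -2`. -/
lemma PG.inv_pfrak {a : ℝ} (ha : a ^ 2 > 2) : PG fun t => (pfrak a t)⁻¹ := by
  refine ⟨?_, 0, 1, fun t => ?_⟩
  · refine Continuous.inv₀ (by unfold pfrak; fun_prop) fun t => (pfrak_neg ha t).ne
  · rw [abs_inv, pow_zero, mul_one]
    refine inv_le_one_of_one_le₀ ?_
    rw [abs_of_neg (pfrak_neg ha t)]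
    unfold pfrak
    nlinarith [mul_nonneg (sub_nonneg.2 ha.le) (sq_nonneg t)]

lemma Pher_eq (a : ℝ) (n : ℕ) (t : ℝ) : Pher a (1 - a ^ 2) n t =
    !![u n t, -a * v n t; -a * v n t, (1 - a ^ 2) * u n t + a ^ 2 * t * v n t] := by
  rw [Pher, H_eq, H_eq]
  ext i j
  fin_cases i <;> fin_cases j <;> simp [v] <;> ring

lemma matDeriv_Pher (a : ℝ) (n : ℕ) (t : ℝ) : matDeriv (Pher a (1 - a ^ 2) n) t =
    !![2 * v n t, -a * (2 * t * v n t - n * u n t);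
      -a * (2 * t * v n t - n * u n t),
      (2 - a ^ 2) * v n t + a ^ 2 * t * (2 * t * v n t - n * u n t)] := by
  have hu := hasDerivAt_u n t
  have hv := hasDerivAt_v n t
  have h4 : HasDerivAt (fun s => (1 - a ^ 2) * u n s + a ^ 2 * s * v n s)
      ((2 - a ^ 2) * v n t + a ^ 2 * t * (2 * t * v n t - n * u n t)) t := by
    exact ((hu.const_mul (1 - a ^ 2)).add
      (((hasDerivAt_id t).const_mul (a ^ 2)).mul hv)).congr_deriv (by simp; ring)
  ext i j
  simp only [matDeriv, Pher_eq, Matrix.of_apply]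
  fin_cases i <;> fin_cases j
  · simpa using hu.deriv
  · simpa using (hv.const_mul (-a)).deriv
  · simpa using (hv.const_mul (-a)).deriv
  · simpa using h4.deriv

/-- The entries of `𝒫ₙ`, for which `(P₁')⁻¹P₁ = [[t, -a/2], [a/(a²-2), t]]`. -/
lemma Pexc_eq {a : ℝ} (ha : a ^ 2 > 2) (n : ℕ) (t : ℝ) : Pexc a n t =
    !![u n t * (n * a ^ 2 - (a ^ 2 - 2)) / (a ^ 2 - 2) - 4 * t * v n t / (a ^ 2 - 2),
        a * n * t * u n t - 2 * a * t ^ 2 * v n t;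
      2 * a * t / (a ^ 2 - 2) * (2 * t * v n t - n * u n t),
        -u n t * ((1 - a ^ 2) + a ^ 2 * n / 2 + a ^ 2 * n * t ^ 2)
          + t * v n t * (2 * a ^ 2 * t ^ 2 - (a ^ 2 - 2))] := by
  have hk : a ^ 2 - 2 ≠ 0 := by linarith
  have hk' : 2 - a ^ 2 ≠ 0 := by linarith
  have hu0 : ∀ t, u 0 t = 1 := fun t => by simp [u, hermPoly]
  have hv0 : ∀ t, v 0 t = 0 := fun t => by simp [v]
  have hM : (matDeriv (Pher a (1 - a ^ 2) 1) t)⁻¹ * Pher a (1 - a ^ 2) 1 t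
      = !![t, -a / 2; a / (a ^ 2 - 2), t] := by
    have h1 : matDeriv (Pher a (1 - a ^ 2) 1) t = !![2, 0; 0, 2 - a ^ 2] := by
      rw [matDeriv_Pher]
      ext i j
      fin_cases i <;> fin_cases j <;> simp [u_succ, v_succ, hu0, hv0]
    have h2 : Pher a (1 - a ^ 2) 1 t = !![2, 0; 0, 2 - a ^ 2] *
        !![t, -a / 2; a / (a ^ 2 - 2), t] := by
      rw [Pher_eq]
      have e := u_succ 0 t
      have e' := v_succ 0 t
      simp only [zero_add] at e e'
      ext i j
      fin_cases i <;> fin_cases j <;>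
        simp [Matrix.mul_apply, Fin.sum_univ_two, e, e', hu0, hv0] <;> field_simp <;> ring
    rw [h1, h2, ← Matrix.mul_assoc, Matrix.nonsing_inv_mul, Matrix.one_mul]
    rw [Matrix.det_fin_two_of]
    exact isUnit_iff_ne_zero.2 (by simpa using hk')
  rw [Pexc, Acal, hM, matDeriv_Pher, Pher_eq]
  ext i j
  fin_cases i <;> fin_cases j <;>
    simp [Matrix.mul_apply, Fin.sum_univ_two] <;> field_simp <;> ring

/-- Up to the scalar `e^{-t²}/𝔭²`, the `(1,1)` entry (indices from `0`) is positive because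
`𝔭 < 0`, and the determinant is `𝔭² (a²-1) / (2(a²-2))`. -/
lemma Wexc_posDef {a : ℝ} (ha : a ^ 2 > 2) (t : ℝ) : (Wexc a t).PosDef := by
  have hp := pfrak_neg ha t
  have hk : 0 < a ^ 2 - 2 := by linarith
  refine Matrix.PosDef.smul ?_ (div_pos (Real.exp_pos _) (sq_pos_of_neg hp))
  set A := a ^ 2 / (4 * (a ^ 2 - 2)) * (pfrak a t) ^ 2 + pfrak a t / (a ^ 2 - 2) - a ^ 2 with hA
  set B := a * (pfrak a t / (a ^ 2 - 2) - 2) * t with hB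
  set D := 2 * (a ^ 2 * (a ^ 2 - 2) - pfrak a t) / (a ^ 2 - 2) ^ 2 with hD
  have hDpos : 0 < D := by
    have : 0 < a ^ 2 * (a ^ 2 - 2) := by nlinarith
    exact div_pos (by linarith) (by positivity)
  have hdet : A * D - B ^ 2 = (pfrak a t) ^ 2 * (a ^ 2 - 1) / (2 * (a ^ 2 - 2)) := by
    rw [hA, hB, hD]
    unfold pfrak
    field_simp
    ring
  have hdet' : 0 < A * D - B ^ 2 := by
    rw [hdet]
    have : 0 < a ^ 2 - 1 := by linarith
    have : 0 < (pfrak a t) ^ 2 := sq_pos_of_neg hp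
    positivity
  refine Matrix.PosDef.of_dotProduct_mulVec_pos ?_ fun x hx => ?_
  · ext i j
    fin_cases i <;> fin_cases j <;> simp
  · -- completing the square
    have e : star x ⬝ᵥ (!![A, B; B, D] *ᵥ x)
        = ((D * x 1 + B * x 0) ^ 2 + (A * D - B ^ 2) * x 0 ^ 2) / D := by
      simp [dotProduct, Matrix.mulVec, Fin.sum_univ_two]
      field_simp
      ring
    rw [e]
    refine div_pos ?_ hDpos
    by_cases h0 : x 0 = 0
    · have h1 : x 1 ≠ 0 := fun h1 => hx (by ext i; fin_cases i <;> simp [h0, h1])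
      rw [h0]
      have : 0 < (D * x 1) ^ 2 := by positivity
      simpa using this
    · have : 0 < (A * D - B ^ 2) * x 0 ^ 2 := by positivity
      nlinarith [sq_nonneg (D * x 1 + B * x 0)]

/-! ### Entrywise integration -/

/-- The function `2 t n Hₙ₋₁ - Hₙ`, a factor of every boundary term in the integrals below. It
vanishes identically for `n = 1`. -/
def w (n : ℕ) (t : ℝ) : ℝ := 2 * t * v n t - u n t

lemma hasDerivAt_w (n : ℕ) (t : ℝ) :
    HasDerivAt (w n) (2 * t * (2 * t * v n t - n * u n t)) t :=
  ((((hasDerivAt_id t).const_mul 2).mul (hasDerivAt_v n t)).sub (hasDerivAt_u n t)).congr_deriv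
    (by simp)

lemma PG.w (n : ℕ) : PG (w n) := (((PG.const 2).mul PG.id).mul (PG.v n)).sub (PG.u n)

/-- If `f` equals `c Hₙ Hₘ e^{-t²}` plus the derivative of `wₙ L e^{-t²} / 𝔭`, then its
integral is `c` times that of `Hₙ Hₘ e^{-t²}`. -/
lemma integral_entry {a : ℝ} (ha : a ^ 2 > 2) (n m : ℕ) {f L L' : ℝ → ℝ} (c : ℝ)
    (hL : PG L) (hL' : PG L') (h : ∀ t, HasDerivAt L (L' t) t)
    (hf : ∀ t, f t = ((2 * t * (2 * t * v n t - n * u n t) * (pfrak a t)⁻¹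
          + w n t * (-((4 - 2 * a ^ 2) * (2 * t)) / pfrak a t ^ 2)) * L t
        + w n t * (pfrak a t)⁻¹ * L' t
        - 2 * t * (w n t * (pfrak a t)⁻¹ * L t)) * Real.exp (-t ^ 2)
        + c * (u n t * u m t * Real.exp (-t ^ 2))) :
    Integrable f ∧ ∫ t, f t
      = c * if n = m then Real.sqrt Real.pi * 2 ^ n * (n.factorial : ℝ) else 0 := by
  have hp := PG.inv_pfrak ha
  have hG := ((PG.w n).mul hp).mul hL
  have hp' : PG fun t => -((4 - 2 * a ^ 2) * (2 * t)) / pfrak a t ^ 2 := by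
    have := ((PG.const (4 - 2 * a ^ 2)).mul ((PG.const 2).mul PG.id)).neg.mul (hp.pow 2)
    simpa [div_eq_mul_inv] using this
  have hw' : PG fun t => 2 * t * (2 * t * v n t - n * u n t) :=
    ((PG.const 2).mul PG.id).mul
      ((((PG.const 2).mul PG.id).mul (PG.v n)).sub ((PG.const _).mul (PG.u n)))
  have hG' := (((hw'.mul hp).add ((PG.w n).mul hp')).mul hL).add (((PG.w n).mul hp).mul hL')
  have hz := integral_gauss_deriv hG hG' fun t =>
    ((hasDerivAt_w n t).mul ((hasDerivAt_pfrak a t).inv (pfrak_neg ha t).ne)).mul (h t)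
  have h1 := (hG'.sub (((PG.const 2).mul PG.id).mul hG)).integrable
  have h2 := ((PG.u n).mul (PG.u m)).integrable.const_mul c
  rw [funext hf]
  refine ⟨h1.add h2, ?_⟩
  rw [integral_add h1 h2, hz, integral_const_mul, integral_u_mul_u, zero_add]

/-- The boundary term is `-(wₙ / 2𝔭)(t Hₘ + (a²/(a²-2)) m Hₘ₋₁) e^{-t²}`. -/
lemma entry_zero_zero {a : ℝ} (ha : a ^ 2 > 2) (n m : ℕ) :
    Integrable (fun t : ℝ => (Pexc a n t * Wexc a t * (Pexc a m t)ᵀ) 0 0) ∧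
    ∫ t : ℝ, (Pexc a n t * Wexc a t * (Pexc a m t)ᵀ) 0 0
      = ((n - 1) / (2 * (a ^ 2 - 2)) * (1 - a ^ 2 + a ^ 2 * (m + 1) / 2)) *
        if n = m then Real.sqrt Real.pi * 2 ^ n * (n.factorial : ℝ) else 0 := by
  have hk : a ^ 2 - 2 ≠ 0 := by linarith
  refine integral_entry ha n m
    (L := fun t => -1 / 2 * (t * u m t + a ^ 2 / (a ^ 2 - 2) * v m t))
    (L' := fun t => -1 / 2 * (u m t + t * (2 * v m t)
      + a ^ 2 / (a ^ 2 - 2) * (2 * t * v m t - m * u m t))) _ ?_ ?_ (fun t => ?_) (fun t => ?_)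
  · exact (PG.const _).mul ((PG.id.mul (PG.u m)).add ((PG.const _).mul (PG.v m)))
  · exact (PG.const _).mul (((PG.u m).add (PG.id.mul ((PG.const _).mul (PG.v m)))).add
      ((PG.const _).mul ((((PG.const 2).mul PG.id).mul (PG.v m)).sub
        ((PG.const _).mul (PG.u m)))))
  · exact ((((hasDerivAt_id t).mul (hasDerivAt_u m t)).add
      ((hasDerivAt_v m t).const_mul _)).const_mul _).congr_deriv (by simp)
  · have hp := (pfrak_neg ha t).ne
    rw [Pexc_eq ha, Pexc_eq ha, Wexc]
    simp [Matrix.mul_apply, Fin.sum_univ_two, w]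
    generalize Real.exp (-t ^ 2) = e
    -- The denominators are cleared before `𝔭` is expanded, while it is still an atom.
    have hpe : pfrak a t = (4 - 2 * a ^ 2) * t ^ 2 - a ^ 2 := rfl
    generalize pfrak a t = p at *
    field_simp
    subst hpe
    ring

/-- Both off-diagonal entries are the derivative of `-(a ξ / (2(a²-2))) wₙ wₘ e^{-t²} / 𝔭`,
with `ξ = 1 - a²`. -/
lemma entry_zero_one {a : ℝ} (ha : a ^ 2 > 2) (n m : ℕ) {i j : Fin 2} (hij : i ≠ j) :
    Integrable (fun t : ℝ => (Pexc a n t * Wexc a t * (Pexc a m t)ᵀ) i j) ∧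
    ∫ t : ℝ, (Pexc a n t * Wexc a t * (Pexc a m t)ᵀ) i j
      = 0 * if n = m then Real.sqrt Real.pi * 2 ^ n * (n.factorial : ℝ) else 0 := by
  have hk : a ^ 2 - 2 ≠ 0 := by linarith
  refine integral_entry ha n m
    (L := fun t => -(a * (1 - a ^ 2) / (2 * (a ^ 2 - 2))) * w m t)
    (L' := fun t => -(a * (1 - a ^ 2) / (2 * (a ^ 2 - 2)))
      * (2 * t * (2 * t * v m t - m * u m t))) _ ?_ ?_ (fun t => ?_) (fun t => ?_)
  · exact (PG.const _).mul (PG.w m)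
  · exact (PG.const _).mul (((PG.const 2).mul PG.id).mul
      ((((PG.const 2).mul PG.id).mul (PG.v m)).sub ((PG.const _).mul (PG.u m))))
  · exact (hasDerivAt_w m t).const_mul _
  · have hp := (pfrak_neg ha t).ne
    rw [Pexc_eq ha, Pexc_eq ha, Wexc]
    fin_cases i <;> fin_cases j <;> first | exact absurd rfl hij | skip
    all_goals
      simp [Matrix.mul_apply, Fin.sum_univ_two, w]
      generalize Real.exp (-t ^ 2) = e
      have hpe : pfrak a t = (4 - 2 * a ^ 2) * t ^ 2 - a ^ 2 := rfl
      generalize pfrak a t = p at *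
      field_simp
      subst hpe
      ring

/-- The boundary term is
`(ξ wₙ / ((a²-2) 𝔭)) (ξ t Hₘ + a² (t² - 1/2) m Hₘ₋₁) e^{-t²}` with `ξ = 1 - a²`. -/
lemma entry_one_one {a : ℝ} (ha : a ^ 2 > 2) (n m : ℕ) :
    Integrable (fun t : ℝ => (Pexc a n t * Wexc a t * (Pexc a m t)ᵀ) 1 1) ∧
    ∫ t : ℝ, (Pexc a n t * Wexc a t * (Pexc a m t)ᵀ) 1 1
      = (-((1 - a ^ 2) * (n - 1) / (a ^ 2 - 2) ^ 2) * (1 - a ^ 2 + a ^ 2 * m / 2)) *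
        if n = m then Real.sqrt Real.pi * 2 ^ n * (n.factorial : ℝ) else 0 := by
  have hk : a ^ 2 - 2 ≠ 0 := by linarith
  refine integral_entry ha n m
    (L := fun t => (1 - a ^ 2) / (a ^ 2 - 2) *
      ((1 - a ^ 2) * (t * u m t) + a ^ 2 * ((t ^ 2 - 1 / 2) * v m t)))
    (L' := fun t => (1 - a ^ 2) / (a ^ 2 - 2) *
      ((1 - a ^ 2) * (u m t + t * (2 * v m t)) + a ^ 2 * (2 * t * v m t
        + (t ^ 2 - 1 / 2) * (2 * t * v m t - m * u m t)))) _ ?_ ?_ (fun t => ?_) (fun t => ?_)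
  · exact (PG.const _).mul (((PG.const _).mul (PG.id.mul (PG.u m))).add
      ((PG.const _).mul (((PG.id.pow 2).sub (PG.const _)).mul (PG.v m))))
  · exact (PG.const _).mul (((PG.const _).mul ((PG.u m).add
      (PG.id.mul ((PG.const _).mul (PG.v m))))).add
      ((PG.const _).mul ((((PG.const 2).mul PG.id).mul (PG.v m)).add
        (((PG.id.pow 2).sub (PG.const _)).mul
        ((((PG.const 2).mul PG.id).mul (PG.v m)).sub ((PG.const _).mul (PG.u m)))))))
  · exact (((((hasDerivAt_id t).mul (hasDerivAt_u m t)).const_mul _).add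
      ((((hasDerivAt_pow 2 t).sub_const _).mul (hasDerivAt_v m t)).const_mul _)).const_mul
        _).congr_deriv (by simp)
  · have hp := (pfrak_neg ha t).ne
    rw [Pexc_eq ha, Pexc_eq ha, Wexc]
    simp [Matrix.mul_apply, Fin.sum_univ_two, w]
    generalize Real.exp (-t ^ 2) = e
    have hpe : pfrak a t = (4 - 2 * a ^ 2) * t ^ 2 - a ^ 2 := rfl
    generalize pfrak a t = p at *
    field_simp
    subst hpe
    ring

/-- For `a² > 2`, the exceptional weight `𝒲_a(t)` is symmetric positive
definite for every real `t`, and the exceptional polynomials `𝒫ₙ`, `n ≠ 1`, are orthogonal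
with respect to `𝒲_a(t)dt` with the explicit squared norms. -/
theorem exceptional_hermite_orthogonality (a : ℝ) (ha : a ^ 2 > 2) :
    (∀ t : ℝ, (Wexc a t).PosDef) ∧
    (∀ n m : ℕ, n ≠ 1 → m ≠ 1 →
      (∀ i j : Fin 2,
        Integrable (fun t : ℝ => (Pexc a n t * Wexc a t * (Pexc a m t)ᵀ) i j)) ∧
      (Matrix.of fun i j : Fin 2 =>
          ∫ t : ℝ, (Pexc a n t * Wexc a t * (Pexc a m t)ᵀ) i j)
        = if n = m then
            (((n : ℝ) - 1) / (2 * (a ^ 2 - 2))) •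
              (Matrix.diagonal ![1, -2 / (a ^ 2 - 2)] *
                ((Real.sqrt Real.pi * 2 ^ n * (n.factorial : ℝ)) •
                  Matrix.diagonal ![1 - a ^ 2 + a ^ 2 * ((n : ℝ) + 1) / 2,
                    (1 - a ^ 2) * (1 - a ^ 2 + a ^ 2 * (n : ℝ) / 2)]))
          else (0 : M2)) := by
  refine ⟨Wexc_posDef ha, fun n m _ _ => ?_⟩
  have h00 := entry_zero_zero ha n m
  have h01 := entry_zero_one ha n m (i := 0) (j := 1) (by decide)
  have h10 := entry_zero_one ha n m (i := 1) (j := 0) (by decide)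
  have h11 := entry_one_one ha n m
  refine ⟨fun i j => ?_, ?_⟩
  · fin_cases i <;> fin_cases j
    exacts [h00.1, h01.1, h10.1, h11.1]
  · have hk : a ^ 2 - 2 ≠ 0 := by linarith
    ext i j
    rw [Matrix.of_apply]
    by_cases hnm : n = m
    · subst hnm
      simp only [if_true] at h00 h01 h10 h11 ⊢
      fin_cases i <;> fin_cases j
      · refine h00.2.trans ?_
        simp
        ring
      · refine h01.2.trans ?_
        simp
      · refine h10.2.trans ?_
        simp
      · refine h11.2.trans ?_
        simp
        field_simp
    · simp only [hnm, if_false, mul_zero] at h00 h01 h10 h11 ⊢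
      fin_cases i <;> fin_cases j
      exacts [h00.2, h01.2, h10.2, h11.2]
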